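/- Let A = F2[a0, a1, aβ, u0, u1, uβ], let q = a0·u1·uβ + a1·u0·uβ + aβ·u0·u1, and let T' be the localization of A/(q) at the multiplicative set generated by the images of a0, a1, aβ. Then there is a well-defined F2-algebra homomorphism φ from R = F2[x,y,z]/(xy + xz + yz) to T' determined by φ(x) = u0·a0^{-1}, φ(y) = u1·a1^{-1}, φ(z) = uβ·aβ^{-1}, and this homomorphism φ is injective. -/

import Mathlib

/-!
STATEMENT 3: Let `A = F2[a0, a1, aβ, u0, u1, uβ]`, `q = a0·u1·uβ + a1·u0·uβ + aβ·u0·u1`,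
and let `T'` be the localization of `A/(q)` at the multiplicative set generated by the
images of `a0, a1, aβ`.  Then there is a well-defined `F2`-algebra homomorphism
`φ : R = F2[x,y,z]/(xy + xz + yz) → T'` with `φ(x) = u0·a0⁻¹`, `φ(y) = u1·a1⁻¹`,
`φ(z) = uβ·aβ⁻¹`, and `φ` is injective.
-/

noncomputable section

open MvPolynomial

/-- The field with two elements. -/
abbrev F2 : Type := ZMod 2

/-- The polynomial ring `F2[x,y,z]`, with `x = X 0`, `y = X 1`, `z = X 2`. -/
abbrev P3 : Type := MvPolynomial (Fin 3) F2

/-- The relation `xy + xz + yz`. -/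
def relP : P3 := X 0 * X 1 + X 0 * X 2 + X 1 * X 2

/-- The ring `R = F2[x,y,z]/(xy + xz + yz)`. -/
abbrev Rring : Type := P3 ⧸ Ideal.span {relP}

/-- The quotient map `F2[x,y,z] → R`. -/
def pr : P3 →ₐ[F2] Rring := Ideal.Quotient.mkₐ F2 (Ideal.span {relP})

/-- The polynomial ring `A = F2[a0, a1, aβ, u0, u1, uβ]` with
`a0 = X 0`, `a1 = X 1`, `aβ = X 2`, `u0 = X 3`, `u1 = X 4`, `uβ = X 5`. -/
abbrev A6 : Type := MvPolynomial (Fin 6) F2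

/-- The Euler-class relation `q = a0·u1·uβ + a1·u0·uβ + aβ·u0·u1`. -/
def qrel : A6 := X 0 * X 4 * X 5 + X 1 * X 3 * X 5 + X 2 * X 3 * X 4

/-- The quotient `A/(q)`. -/
abbrev Aq : Type := A6 ⧸ Ideal.span {qrel}

/-- The quotient map `A → A/(q)`. -/
def aq : A6 →+* Aq := Ideal.Quotient.mk (Ideal.span {qrel})

/-- The multiplicative set generated by the images of `a0, a1, aβ` in `A/(q)`. -/
def Sa : Submonoid Aq := Submonoid.closure {aq (X 0), aq (X 1), aq (X 2)}

/-- `T'`, the localization of `A/(q)` at `a0, a1, aβ`. -/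
abbrev T' : Type := Localization Sa

instance : Algebra F2 T' :=
  ((algebraMap Aq T').comp (algebraMap F2 Aq)).toAlgebra (R := F2) (S := T')

/-- `a0` as an element of the multiplicative set. -/
def a0S : Sa := ⟨aq (X 0), Submonoid.subset_closure (by simp)⟩

/-- `a1` as an element of the multiplicative set. -/
def a1S : Sa := ⟨aq (X 1), Submonoid.subset_closure (by simp)⟩

/-- `aβ` as an element of the multiplicative set. -/
def aβS : Sa := ⟨aq (X 2), Submonoid.subset_closure (by simp)⟩

/-!
Dividing `q` by `a0·a1·aβ` shows that the fractions `u/a` satisfy `xy + xz + yz = 0`, so `φ` exists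
over any coefficient ring. Setting every `a` to `1` and every `u` to the corresponding variable
turns `q` into `xy + xz + yz`; since `1` is a unit, this substitution extends to the localization,
where it is a left inverse of `φ`.
-/

section FractionRetraction

variable {K A B T σ : Type*} [CommRing K] [CommRing A] [Algebra K A] [CommRing B] [Algebra K B]
  [CommRing T] [Algebra K T] [Algebra A T] [IsScalarTower K A T] {M : Submonoid A}
  [IsLocalization M T]

/-- The `K`-algebra homomorphism `K[X]/(f) → B` given by a zero `b` of `f` in `B`. -/
def quotientSpanAeval (f : MvPolynomial σ K) (b : σ → B) (hb : aeval b f = 0) :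
    (MvPolynomial σ K ⧸ Ideal.span {f}) →ₐ[K] B :=
  Ideal.Quotient.liftₐ _ (aeval b) fun _ hp ↦
    (Ideal.span_singleton_le_iff_mem (RingHom.ker (aeval b))).2 hb hp

theorem quotientSpanAeval_mk_X (f : MvPolynomial σ K) (b : σ → B) (hb : aeval b f = 0) (i : σ) :
    quotientSpanAeval f b hb (Ideal.Quotient.mk _ (X i)) = b i :=
  (Ideal.Quotient.lift_mk _ _ _).trans (aeval_X b i)

theorem liftAlgHom_mk'_of_map_eq_one {ρ : A →ₐ[K] B} (hunit : ∀ m : M, IsUnit (ρ m)) (a : A)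
    {m : M} (hm : ρ m = 1) :
    IsLocalization.liftAlgHom (S := T) hunit (IsLocalization.mk' T a m) = ρ a := by
  rw [IsLocalization.liftAlgHom_apply, IsLocalization.lift_mk'_spec]
  simp [hm]

theorem injective_of_map_X_eq_mk' {I : Ideal (MvPolynomial σ K)}
    {ρ : A →ₐ[K] MvPolynomial σ K ⧸ I} (hρ : ∀ m : M, ρ m = 1)
    {φ : (MvPolynomial σ K ⧸ I) →ₐ[K] T} {u : σ → A} {a : σ → M}
    (hρu : ∀ i, ρ (u i) = Ideal.Quotient.mk I (X i))
    (hφ : ∀ i, φ (Ideal.Quotient.mk I (X i)) = IsLocalization.mk' T (u i) (a i)) :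
    Function.Injective φ := by
  have hunit (m : M) : IsUnit (ρ m) := hρ m ▸ isUnit_one
  let ψ : T →ₐ[K] MvPolynomial σ K ⧸ I := IsLocalization.liftAlgHom hunit
  have hψφ : ψ.comp φ = AlgHom.id K _ := by
    refine Ideal.Quotient.algHom_ext _ (MvPolynomial.algHom_ext fun i ↦ ?_)
    calc ψ (φ (Ideal.Quotient.mk I (X i)))
      _ = ψ (IsLocalization.mk' T (u i) (a i)) := congrArg ψ (hφ i)
      _ = ρ (u i) := liftAlgHom_mk'_of_map_eq_one hunit _ (hρ _)
      _ = Ideal.Quotient.mk I (X i) := hρu i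
  exact Function.LeftInverse.injective (g := ψ) (AlgHom.congr_fun hψφ)

end FractionRetraction

theorem pairwise_products_eq_zero_of_isUnit {T : Type*} [CommRing T] {x a u : Fin 3 → T}
    (ha : ∀ i, IsUnit (a i)) (hx : ∀ i, x i * a i = u i)
    (hq : a 0 * u 1 * u 2 + a 1 * u 0 * u 2 + a 2 * u 0 * u 1 = 0) :
    x 0 * x 1 + x 0 * x 2 + x 1 * x 2 = 0 := by
  have hunit : IsUnit (a 0 * a 1 * a 2) := ((ha 0).mul (ha 1)).mul (ha 2)
  rw [← hunit.mul_right_eq_zero, ← hq, ← hx 0, ← hx 1, ← hx 2]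
  ring

section EulerRing

variable (K : Type*) [CommRing K]

/-- The polynomial `xy + xz + yz` over an arbitrary coefficient ring. -/
def pairwiseRelation : MvPolynomial (Fin 3) K := X 0 * X 1 + X 0 * X 2 + X 1 * X 2

/-- The ring `K[x,y,z]/(xy + xz + yz)`, which is `Rring` for `K = F2`. -/
abbrev PairwiseRing : Type _ := MvPolynomial (Fin 3) K ⧸ Ideal.span {pairwiseRelation K}

theorem mk_X_pairwise_products_eq_zero :
    (Ideal.Quotient.mk _ (X 0) * Ideal.Quotient.mk _ (X 1)
      + Ideal.Quotient.mk _ (X 0) * Ideal.Quotient.mk _ (X 2)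
      + Ideal.Quotient.mk _ (X 1) * Ideal.Quotient.mk _ (X 2) : PairwiseRing K) = 0 :=
  Ideal.Quotient.eq_zero_iff_mem.2 (Ideal.mem_span_singleton_self (pairwiseRelation K))

/-- The Euler-class relation over an arbitrary coefficient ring, with the variables ordered as
in `A6`. -/
def eulerRelation : MvPolynomial (Fin 6) K := X 0 * X 4 * X 5 + X 1 * X 3 * X 5 + X 2 * X 3 * X 4

/-- The ring `K[a0, a1, aβ, u0, u1, uβ]/(q)`, which is `Aq` for `K = F2`. -/
abbrev EulerRing : Type _ := MvPolynomial (Fin 6) K ⧸ Ideal.span {eulerRelation K}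

/-- The class of the `j`-th variable in `EulerRing K`. -/
def eulerVar (j : Fin 6) : EulerRing K := Ideal.Quotient.mk _ (X j)

/-- The multiplicative set generated by the Euler classes `a0, a1, aβ`. -/
def eulerMonoid : Submonoid (EulerRing K) :=
  Submonoid.closure {eulerVar K 0, eulerVar K 1, eulerVar K 2}

/-- The Euler classes `a0, a1, aβ` as elements of the multiplicative set they generate. -/
def eulerClass : Fin 3 → eulerMonoid K :=
  ![⟨eulerVar K 0, Submonoid.subset_closure (by simp)⟩,
    ⟨eulerVar K 1, Submonoid.subset_closure (by simp)⟩,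
    ⟨eulerVar K 2, Submonoid.subset_closure (by simp)⟩]

/-- The orientation classes `u0, u1, uβ`. -/
def orientationClass : Fin 3 → EulerRing K := ![eulerVar K 3, eulerVar K 4, eulerVar K 5]

theorem eulerClass_orientationClass_relation :
    (eulerClass K 0 : EulerRing K) * orientationClass K 1 * orientationClass K 2
      + eulerClass K 1 * orientationClass K 0 * orientationClass K 2
      + eulerClass K 2 * orientationClass K 0 * orientationClass K 1 = 0 :=
  Ideal.Quotient.eq_zero_iff_mem.2 (Ideal.mem_span_singleton_self (eulerRelation K))

/-- The `PairwiseRing K`-valued point with coordinates `a = (1, 1, 1)` and `u = (x, y, z)`. -/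
def dehomogenizationPoint : Fin 6 → PairwiseRing K :=
  ![1, 1, 1, Ideal.Quotient.mk _ (X 0), Ideal.Quotient.mk _ (X 1), Ideal.Quotient.mk _ (X 2)]

theorem aeval_dehomogenizationPoint_eulerRelation :
    aeval (dehomogenizationPoint K) (eulerRelation K) = 0 := by
  simp only [eulerRelation, dehomogenizationPoint, map_add, map_mul, aeval_X, Matrix.cons_val]
  linear_combination mk_X_pairwise_products_eq_zero K

/-- The homomorphism `K[a, u]/(q) → K[x,y,z]/(xy + xz + yz)` that sends each Euler class to `1` and
each orientation class to the corresponding variable. -/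
def dehomogenization : EulerRing K →ₐ[K] PairwiseRing K :=
  quotientSpanAeval _ _ (aeval_dehomogenizationPoint_eulerRelation K)

theorem dehomogenization_orientationClass (i : Fin 3) :
    dehomogenization K (orientationClass K i) = Ideal.Quotient.mk _ (X i) := by
  fin_cases i <;> exact quotientSpanAeval_mk_X _ _ _ _

theorem dehomogenization_eq_one (m : eulerMonoid K) : dehomogenization K m = 1 := by
  have hle : eulerMonoid K ≤ MonoidHom.mker (dehomogenization K) := by
    refine Submonoid.closure_le.2 ?_
    rintro _ (rfl | rfl | rfl) <;> exact quotientSpanAeval_mk_X _ _ _ _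
  exact hle m.2

variable (T : Type*) [CommRing T] [Algebra (EulerRing K) T] [IsLocalization (eulerMonoid K) T]

/-- The fractions `u0/a0`, `u1/a1`, `uβ/aβ` in a localization at the Euler classes. -/
def eulerFraction (i : Fin 3) : T := IsLocalization.mk' T (orientationClass K i) (eulerClass K i)

theorem eulerFraction_pairwise_products_eq_zero :
    eulerFraction K T 0 * eulerFraction K T 1 + eulerFraction K T 0 * eulerFraction K T 2
      + eulerFraction K T 1 * eulerFraction K T 2 = 0 := by
  refine pairwise_products_eq_zero_of_isUnit
    (fun i ↦ IsLocalization.map_units T (eulerClass K i)) (fun i ↦ IsLocalization.mk'_spec T _ _) ?_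
  simpa only [map_add, map_mul, map_zero] using
    congrArg (algebraMap (EulerRing K) T) (eulerClass_orientationClass_relation K)

theorem geometric_fixed_points_embeds_general [Algebra K T] [IsScalarTower K (EulerRing K) T] :
    ∃ φ : PairwiseRing K →ₐ[K] T,
      (∀ i, φ (Ideal.Quotient.mk _ (X i)) = eulerFraction K T i) ∧
      Function.Injective φ := by
  have hzero : aeval (eulerFraction K T) (pairwiseRelation K) = 0 := by
    simpa only [pairwiseRelation, map_add, map_mul, aeval_X] using
      eulerFraction_pairwise_products_eq_zero K T
  have hφ := quotientSpanAeval_mk_X _ _ hzero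
  exact ⟨quotientSpanAeval _ _ hzero, hφ, injective_of_map_X_eq_mk' (dehomogenization_eq_one K)
    (dehomogenization_orientationClass K) hφ⟩

end EulerRing

instance : Algebra (EulerRing F2) T' := inferInstanceAs (Algebra Aq T')

instance : IsLocalization (eulerMonoid F2) T' := inferInstanceAs (IsLocalization Sa T')

-- The scalar action of `F2` on `T'` has to be the one induced by its `Algebra F2 T'` instance;
-- instance search would pick that of `OreLocalization`.
instance : @IsScalarTower F2 (EulerRing F2) T'
    Algebra.toSMul Algebra.toSMul Algebra.toSMul :=
  IsScalarTower.of_algebraMap_eq' rfl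

/-- There is a well-defined injective `F2`-algebra homomorphism `φ : R → T'` with
`φ(x) = u0·a0⁻¹`, `φ(y) = u1·a1⁻¹`, `φ(z) = uβ·aβ⁻¹`. -/
theorem geometric_fixed_points_embeds :
    ∃ φ : Rring →ₐ[F2] T',
      φ (pr (X 0)) = Localization.mk (aq (X 3)) a0S ∧
      φ (pr (X 1)) = Localization.mk (aq (X 4)) a1S ∧
      φ (pr (X 2)) = Localization.mk (aq (X 5)) aβS ∧
      Function.Injective φ := by
  obtain ⟨φ, hφ, hinj⟩ := geometric_fixed_points_embeds_general F2 T'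
  exact ⟨φ, by simpa only [Localization.mk_eq_mk'] using ⟨hφ 0, hφ 1, hφ 2, hinj⟩⟩

end
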